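/- (Rota) Let X be a nonempty n-element set and let Π(X) be the lattice of set partitions of X, ordered by refinement (σ ≤ π iff every block of σ is contained in a block of π), with minimum 0̂ (all singletons) and maximum 1̂ (one block). Then μ_{Π(X)}(0̂, 1̂) = (−1)^{n−1}(n−1)!. -/

import Mathlib

open scoped Classical

/-- The Möbius function of a finite poset (the unique `μ` with `μ ⋆ ζ = δ`),
evaluated at a pair of elements. -/
noncomputable def mobius {P : Type*} [Fintype P] [PartialOrder P] (x y : P) : ℝ :=
  letI : LocallyFiniteOrder P := Fintype.toLocallyFiniteOrder
  IncidenceAlgebra.mu ℝ x y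

instance {α : Type*} [Finite α] : Finite (Setoid α) :=
  Finite.of_injective (fun s : Setoid α => ⇑s) fun _ _ h => Setoid.eq_iff_rel_eq.2 h

noncomputable instance {α : Type*} [Finite α] : Fintype (Setoid α) := Fintype.ofFinite _

/-!
Fix `s : Setoid X`. Each of the `q ^ |X/s|` functions `X → Fin q` that are constant on the classes
of `s` has a kernel `t ≥ s`, and the functions with kernel `t` are the injections of `X/t` into
`Fin q`. Hence `q ^ |X/s|` is the sum of the falling factorials of `q` of length `|X/t|` over
`t ≥ s`, which is an identity of polynomials in `q`. Its linear coefficient on the left is `1` for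
`s = ⊤` and `0` otherwise, so Möbius inversion identifies `μ(s, ⊤)` with the linear coefficient of
`q (q - 1) ⋯ (q - |X/s| + 1)`.
-/

section Kernel

variable {X Y : Type*} [Finite X]

lemma card_subtype_le_ker (s : Setoid X) :
    Nat.card {f : X → Y // s ≤ Setoid.ker f} = Nat.card Y ^ Nat.card (Quotient s) := by
  rw [Nat.card_congr (Setoid.liftEquiv s), Nat.card_fun]

lemma card_subtype_ker_eq [Finite Y] (s : Setoid X) :
    Nat.card {f : X → Y // Setoid.ker f = s} =
      (Nat.card Y).descFactorial (Nat.card (Quotient s)) := by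
  have := Fintype.ofFinite (Quotient s)
  have := Fintype.ofFinite Y
  have kernelEquiv : {f : X → Y // Setoid.ker f = s} ≃ (Quotient s ↪ Y) :=
    calc {f : X → Y // Setoid.ker f = s}
      _ ≃ {f : {f : X → Y // s ≤ Setoid.ker f} // Setoid.ker f.1 = s} :=
        (Equiv.subtypeSubtypeEquivSubtype fun h => h.ge).symm
      _ ≃ {g : Quotient s → Y // Function.Injective g} :=
        (Setoid.liftEquiv s).subtypeEquiv fun f =>
          (Setoid.lift_injective_iff_ker_eq_of_le f.2).symm
      _ ≃ (Quotient s ↪ Y) := Equiv.subtypeInjectiveEquivEmbedding _ _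
  simp only [Nat.card_congr kernelEquiv, Nat.card_eq_fintype_card, Fintype.card_embedding_eq]

lemma card_subtype_le_ker_eq_sum [Finite Y] [LocallyFiniteOrderTop (Setoid X)] (s : Setoid X) :
    Nat.card {f : X → Y // s ≤ Setoid.ker f} =
      ∑ t ∈ Finset.Ici s, Nat.card {f : X → Y // Setoid.ker f = t} := by
  have := Fintype.ofFinite (X → Y)
  simp only [Nat.card_eq_fintype_card, Fintype.card_subtype]
  rw [Finset.card_eq_sum_card_fiberwise (f := Setoid.ker) (t := Finset.Ici s)
    (by simp [Set.MapsTo])]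
  refine Finset.sum_congr rfl fun t ht => congrArg Finset.card ?_
  rw [Finset.filter_filter]
  exact Finset.filter_congr fun f _ => and_iff_right_of_imp fun h => h ▸ Finset.mem_Ici.1 ht

end Kernel

section Polynomial

open Polynomial

variable {X : Type*} [Finite X]

lemma pow_card_quotient_eq_sum_descFactorial [LocallyFiniteOrderTop (Setoid X)]
    (s : Setoid X) (q : ℕ) :
    q ^ Nat.card (Quotient s) = ∑ t ∈ Finset.Ici s, q.descFactorial (Nat.card (Quotient t)) := by
  simpa only [card_subtype_le_ker, card_subtype_ker_eq, Nat.card_fin] using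
    card_subtype_le_ker_eq_sum (Y := Fin q) s

lemma X_pow_card_quotient_eq_sum_descPochhammer (R : Type*) [Ring R]
    [LocallyFiniteOrderTop (Setoid X)] (s : Setoid X) :
    (Polynomial.X : R[X]) ^ Nat.card (Quotient s) =
      ∑ t ∈ Finset.Ici s, descPochhammer R (Nat.card (Quotient t)) := by
  have int_identity : (Polynomial.X : ℤ[X]) ^ Nat.card (Quotient s) =
      ∑ t ∈ Finset.Ici s, descPochhammer ℤ (Nat.card (Quotient t)) := by
    refine eq_of_infinite_eval_eq _ _
      (Set.infinite_of_injective_forall_mem (Nat.cast_injective (R := ℤ)) fun q => ?_)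
    simp only [Set.mem_ofPred_eq, eval_pow, eval_X, eval_finsetSum,
      descPochhammer_eval_eq_descFactorial]
    exact_mod_cast pow_card_quotient_eq_sum_descFactorial s q
  simpa [Polynomial.map_sum, descPochhammer_map] using
    congrArg (Polynomial.map (Int.castRingHom R)) int_identity

lemma coeff_one_descPochhammer_succ (R : Type*) [Ring R] (n : ℕ) :
    (descPochhammer R (n + 1)).coeff 1 = (-1) ^ n * (n.factorial : R) := by
  induction n with
  | zero => simp
  | succ n ih =>
    have coeff_zero : (descPochhammer R (n + 1)).coeff 0 = 0 := by
      rw [coeff_zero_eq_eval_zero, descPochhammer_ne_zero_eval_zero R n.succ_ne_zero]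
    rw [descPochhammer_succ_right, mul_sub, coeff_sub, coeff_mul_X, coeff_mul_natCast, coeff_zero,
      ih, Nat.factorial_succ, mul_comm (n + 1), Nat.cast_mul, pow_succ]
    simp [mul_assoc]

end Polynomial

section Mobius

open Polynomial

variable {X : Type*} [Nonempty X]

lemma card_quotient_eq_one_iff (s : Setoid X) : Nat.card (Quotient s) = 1 ↔ s = ⊤ := by
  rw [Nat.card_eq_one_iff_unique, Quotient.subsingleton_iff, nonempty_quotient_iff]
  exact and_iff_left ‹Nonempty X›

variable [Finite X]

lemma mu_top_eq_coeff_descPochhammer (R : Type*) [Ring R] [LocallyFiniteOrder (Setoid X)]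
    (s : Setoid X) :
    IncidenceAlgebra.mu R s ⊤ = (descPochhammer R (Nat.card (Quotient s))).coeff 1 := by
  have linear_coeff (t : Setoid X) : (if t = ⊤ then 1 else 0) =
      ∑ u ∈ Finset.Ici t, (descPochhammer R (Nat.card (Quotient u))).coeff 1 := by
    rw [← finsetSum_coeff, ← X_pow_card_quotient_eq_sum_descPochhammer, coeff_X_pow]
    simp only [eq_comm (a := 1), card_quotient_eq_one_iff]
  rw [IncidenceAlgebra.moebius_inversion_top _ _ linear_coeff s]
  simp

theorem rota_mobius_partition_lattice_general (R : Type*) [Ring R]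
    [LocallyFiniteOrder (Setoid X)] (s : Setoid X) :
    IncidenceAlgebra.mu R s ⊤ =
      (-1) ^ (Nat.card (Quotient s) - 1) * ((Nat.card (Quotient s) - 1).factorial : R) := by
  have : Nonempty (Quotient s) := (nonempty_quotient_iff s).2 ‹Nonempty X›
  rw [← coeff_one_descPochhammer_succ, Nat.sub_add_cancel Nat.card_pos,
    mu_top_eq_coeff_descPochhammer]

end Mobius

/-- **Rota**: in the lattice of set partitions of a nonempty `n`-element set `X`
(realised as the lattice `Setoid X` of equivalence relations on `X`, ordered by refinement,
with minimum `⊥` the partition into singletons and maximum `⊤` the one-block partition),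
the Möbius function satisfies `μ(0̂, 1̂) = (-1)^(n-1) (n-1)!`. -/
theorem rota_mobius_partition_lattice {X : Type*} [Fintype X] [Nonempty X] :
    mobius (⊥ : Setoid X) (⊤ : Setoid X) =
      (-1) ^ (Fintype.card X - 1) * (Nat.factorial (Fintype.card X - 1) : ℝ) := by
  rw [← Nat.card_eq_fintype_card, ← Nat.card_congr Setoid.quotientBotEquiv]
  exact @rota_mobius_partition_lattice_general X _ _ ℝ _ Fintype.toLocallyFiniteOrder ⊥
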